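/- arXiv:1802.02554 — 4 statements merged into one kernel-verified Lean document; each statement's English description precedes it below -/
import Mathlib

section
/- Let (x_k) be a bounded sequence in ℝⁿ, let S ⊆ ℝⁿ be nonempty, and let D ⊆ S be a countable set that is dense in S. Suppose that every cluster point of (x_k) belongs to S, and that for every s ∈ D the real sequence (‖x_k − s‖)_k converges. Then (x_k) converges to some point of S. -/
open Filter Topology

/-!
If `p` and `q` are cluster points of `x`, then for each `s ∈ D` both `‖p - s‖` and `‖q - s‖` equal
the limit of `‖x k - s‖`. The set of `s` with `‖p - s‖ = ‖q - s‖` is closed, so it contains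
`closure D`, hence `S`; as `p ∈ S`, taking `s = p` gives `q = p`. A bounded sequence in `ℝⁿ` has a
cluster point, and it converges to that point once no other exists.
-/

/-- A bounded sequence in `ℝⁿ` all of whose cluster points lie in a set `S`, and such
that `‖x_k - s‖` converges for every `s` in a countable dense subset `D` of `S`,
converges to a point of `S`. -/
theorem bounded_seq_converges_of_dist_to_dense_subset_converges
    {n : ℕ} (x : ℕ → EuclideanSpace ℝ (Fin n))
    (S D : Set (EuclideanSpace ℝ (Fin n)))
    (hbdd : Bornology.IsBounded (Set.range x))
    (hS : S.Nonempty)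
    (hDS : D ⊆ S) (hDcount : D.Countable) (hdense : S ⊆ closure D)
    (hcluster : ∀ p, MapClusterPt p atTop x → p ∈ S)
    (hconv : ∀ s ∈ D, ∃ c : ℝ, Tendsto (fun k => ‖x k - s‖) atTop (𝓝 c)) :
    ∃ p ∈ S, Tendsto x atTop (𝓝 p) := by
  have key : ∀ p, MapClusterPt p atTop x → ∀ s c,
      Tendsto (fun k => ‖x k - s‖) atTop (𝓝 c) → ‖p - s‖ = c := by
    intro p hp s c hc
    obtain ⟨φ, hφ, hlim⟩ := hp.tendsto_subseq
    exact tendsto_nhds_unique (hlim.sub_const s).norm (hc.comp hφ.tendsto_atTop)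
  obtain ⟨p, -, φ, hφ, hlim⟩ := tendsto_subseq_of_bounded hbdd (fun k => Set.mem_range_self k)
  have hp : MapClusterPt p atTop x := hlim.mapClusterPt.of_comp hφ.tendsto_atTop
  refine ⟨p, hcluster p hp, hbdd.isCompact_closure.tendsto_nhds_of_unique_mapClusterPt
    (Eventually.of_forall fun k => subset_closure (Set.mem_range_self k)) fun q _ hq => ?_⟩
  have hclosed : IsClosed {s | ‖p - s‖ = ‖q - s‖} :=
    isClosed_eq (by fun_prop) (by fun_prop)
  have hD : D ⊆ {s | ‖p - s‖ = ‖q - s‖} := fun s hs => by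
    obtain ⟨c, hc⟩ := hconv s hs
    exact (key p hp s c hc).trans (key q hq s c hc).symm
  have h : ‖p - p‖ = ‖q - p‖ := closure_minimal hD hclosed (hdense (hcluster p hp))
  rw [sub_self, norm_zero] at h
  exact sub_eq_zero.mp (norm_eq_zero.mp h.symm)
end

section
/- (Supermartingale convergence / Robbins–Siegmund.) Let (Ω, 𝔉, P) be a probability space with a filtration (𝔉_k)_{k≥0}, and let (Y_k), (Z_k), (W_k) be sequences of nonnegative integrable random variables such that Y_k, Z_k, W_k are 𝔉_k-measurable for each k, E[Y_{k+1} | 𝔉_k] ≤ Y_k − Z_k + W_k almost surely for every k, and Σ_k W_k < ∞ almost surely. Then Σ_k Z_k < ∞ almost surely, and (Y_k) converges almost surely to a nonnegative random variable. -/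
open MeasureTheory Filter Topology

/-!
Write `Q n = 1 + Y n + ∑_{i<n} Z i` and `P n = ∏_{i<n} (1 + W i)`. The hypothesis gives
`E[Q (n+1) | ℱ n] ≤ Q n + W n ≤ (1 + W n) * Q n`, the last step because `Q n ≥ 1`. Since
`P (n+1) = P n * (1 + W n)` is `ℱ n`-measurable, the quotient `Q n / P n` is a nonnegative
supermartingale and converges almost surely. Where `∑ W k` is finite, `P n` converges as well,
hence so does `Q n = (Q n / P n) * P n`. A convergent `Q` bounds the partial sums of `Z`, which
gives the summability of `Z`, and then `Y n = Q n - 1 - ∑_{i<n} Z i` converges. The weights `P n`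
make a localization by stopping times unnecessary.
-/

/-- Nonnegativity makes `∫ X n ≤ ∫ X 0` an `L¹` bound, so the submartingale `-X` converges. -/
lemma ae_tendsto_of_nonneg_supermartingale
    {Ω : Type*} {m0 : MeasurableSpace Ω} {μ : Measure Ω} [IsProbabilityMeasure μ]
    {ℱ : Filtration ℕ m0} {X : ℕ → Ω → ℝ} (hX : Supermartingale X ℱ μ)
    (hX0 : ∀ n ω, 0 ≤ X n ω) :
    ∀ᵐ ω ∂μ, ∃ c : ℝ, Tendsto (fun n => X n ω) atTop (𝓝 c) := by
  have hbdd : ∀ n, eLpNorm ((-X) n) 1 μ ≤ (∫ ω, X 0 ω ∂μ).toNNReal := by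
    intro n
    have h1 : ∫ ω, X n ω ∂μ ≤ ∫ ω, X 0 ω ∂μ := by
      simpa using hX.setIntegral_le (Nat.zero_le n) MeasurableSet.univ
    have h2 : eLpNorm ((-X) n) 1 μ = ENNReal.ofReal (∫ ω, X n ω ∂μ) := by
      rw [Pi.neg_apply, eLpNorm_neg, eLpNorm_one_eq_lintegral_enorm,
        ← ofReal_integral_norm_eq_lintegral_enorm (hX.integrable n)]
      simp only [Real.norm_eq_abs, abs_of_nonneg (hX0 n _)]
    rw [h2]
    exact ENNReal.ofReal_le_ofReal h1
  filter_upwards [hX.neg.exists_ae_tendsto_of_bdd hbdd] with ω ⟨c, hc⟩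
  exact ⟨-c, by simpa using hc.neg⟩

/-- The deterministic conclusion, along a single sample path: if `Q n = 1 + y n + ∑_{i<n} z i`
divided by `∏_{i<n} (1 + w i)` converges and `w` is summable, then `z` is summable and `y`
converges. -/
lemma summable_and_tendsto_of_weighted_tendsto {y z w : ℕ → ℝ} (hy : ∀ n, 0 ≤ y n)
    (hz : ∀ n, 0 ≤ z n) (hw : ∀ n, 0 ≤ w n) (hws : Summable w) {c : ℝ}
    (hc : Tendsto (fun n => (∏ i ∈ Finset.range n, (1 + w i))⁻¹ *
      (y n + (1 + ∑ i ∈ Finset.range n, z i))) atTop (𝓝 c)) :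
    Summable z ∧ ∃ c : ℝ, 0 ≤ c ∧ Tendsto y atTop (𝓝 c) := by
  have hP := (Real.multipliable_one_add_of_summable hws).tendsto_prod_tprod_nat
  have hPpos : ∀ n, 0 < ∏ i ∈ Finset.range n, (1 + w i) := fun n =>
    Finset.prod_pos fun i _ => by linarith [hw i]
  obtain ⟨q, hq⟩ : ∃ q, Tendsto (fun n => y n + (1 + ∑ i ∈ Finset.range n, z i)) atTop (𝓝 q) := by
    refine ⟨_, (hP.mul hc).congr fun n => ?_⟩
    rw [mul_inv_cancel_left₀ (hPpos n).ne']
  obtain ⟨B, hB⟩ := hq.bddAbove_range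
  have hzs : Summable z := by
    refine summable_of_sum_range_le (c := B) hz fun n => ?_
    have := hB ⟨n, rfl⟩
    dsimp only at this
    linarith [hy n]
  have hlim : Tendsto y atTop (𝓝 (q - (1 + ∑' i, z i))) :=
    (hq.sub (hzs.tendsto_sum_tsum_nat.const_add 1)).congr fun n => by ring
  exact ⟨hzs, _, ge_of_tendsto' hlim hy, hlim⟩

/-- **Supermartingale convergence (Robbins–Siegmund)**. Let `(Y_k)`, `(Z_k)`, `(W_k)` be
sequences of nonnegative integrable random variables adapted to a filtration `(𝔉_k)`,
with `E[Y_{k+1} | 𝔉_k] ≤ Y_k - Z_k + W_k` a.s. for every `k` and `∑_k W_k < ∞` a.s.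
Then `∑_k Z_k < ∞` a.s. and `Y_k` converges a.s. to a nonnegative (random) limit. -/
theorem robbins_siegmund_supermartingale_convergence
    {Ω : Type*} {m0 : MeasurableSpace Ω} (μ : Measure Ω) [IsProbabilityMeasure μ]
    (ℱ : Filtration ℕ m0)
    (Y Z W : ℕ → Ω → ℝ)
    (hYnonneg : ∀ k ω, 0 ≤ Y k ω) (hZnonneg : ∀ k ω, 0 ≤ Z k ω)
    (hWnonneg : ∀ k ω, 0 ≤ W k ω)
    (hYint : ∀ k, Integrable (Y k) μ) (hZint : ∀ k, Integrable (Z k) μ)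
    (hWint : ∀ k, Integrable (W k) μ)
    (hYmeas : ∀ k, Measurable[ℱ k] (Y k))
    (hZmeas : ∀ k, Measurable[ℱ k] (Z k))
    (hWmeas : ∀ k, Measurable[ℱ k] (W k))
    (hsuper : ∀ k, μ[Y (k + 1) | ℱ k] ≤ᵐ[μ] fun ω => Y k ω - Z k ω + W k ω)
    (hWsum : ∀ᵐ ω ∂μ, Summable (fun k => W k ω)) :
    ∀ᵐ ω ∂μ, Summable (fun k => Z k ω) ∧
      ∃ c : ℝ, 0 ≤ c ∧ Tendsto (fun k => Y k ω) atTop (𝓝 c) := by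
  set S : ℕ → Ω → ℝ := fun n ω => 1 + ∑ i ∈ Finset.range n, Z i ω with hS
  set C : ℕ → Ω → ℝ := fun n ω => (∏ i ∈ Finset.range n, (1 + W i ω))⁻¹ with hC
  have hPge : ∀ n ω, 1 ≤ ∏ i ∈ Finset.range n, (1 + W i ω) := fun n ω =>
    Finset.prod_induction _ (1 ≤ ·) (fun _ _ => one_le_mul_of_one_le_of_one_le) le_rfl
      fun i _ => by linarith [hWnonneg i ω]
  have hC0 : ∀ n ω, 0 ≤ C n ω := fun n ω => inv_nonneg.2 (zero_le_one.trans (hPge n ω))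
  have hC1 : ∀ n ω, C n ω ≤ 1 := fun n ω => inv_le_one_of_one_le₀ (hPge n ω)
  have hS1 : ∀ n ω, 1 ≤ S n ω := fun n ω => by
    have := Finset.sum_nonneg fun i (_ : i ∈ Finset.range n) => hZnonneg i ω
    simp only [hS]; linarith
  -- `S` and `C` are predictable: their `(n+1)`-st terms are already `ℱ n`-measurable.
  have hSpred : ∀ n, Measurable[ℱ n] (S (n + 1)) := fun n =>
    Measurable.const_add (Finset.measurable_fun_sum _ fun i hi =>
      (hZmeas i).mono (ℱ.mono (Nat.lt_succ_iff.1 (Finset.mem_range.1 hi))) le_rfl) _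
  have hCpred : ∀ n, Measurable[ℱ n] (C (n + 1)) := fun n =>
    Measurable.inv (Finset.measurable_fun_prod _ fun i hi => Measurable.const_add
      ((hWmeas i).mono (ℱ.mono (Nat.lt_succ_iff.1 (Finset.mem_range.1 hi))) le_rfl) _)
  have hSad : ∀ n, Measurable[ℱ n] (S n) := fun n =>
    Measurable.const_add (Finset.measurable_fun_sum _ fun i hi =>
      (hZmeas i).mono (ℱ.mono (Finset.mem_range.1 hi).le) le_rfl) _
  have hCad : ∀ n, Measurable[ℱ n] (C n) := fun n =>
    Measurable.inv (Finset.measurable_fun_prod _ fun i hi => Measurable.const_add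
      ((hWmeas i).mono (ℱ.mono (Finset.mem_range.1 hi).le) le_rfl) _)
  have hSint : ∀ n, Integrable (S n) μ := fun n =>
    (integrable_const 1).add (integrable_finsetSum _ fun i _ => hZint i)
  have hQint : ∀ n, Integrable (Y n + S n) μ := fun n => (hYint n).add (hSint n)
  have hCbdd : ∀ n, ∀ᵐ ω ∂μ, ‖C n ω‖ ≤ 1 := fun n => ae_of_all _ fun ω => by
    rw [Real.norm_of_nonneg (hC0 n ω)]; exact hC1 n ω
  have hX : Supermartingale (fun n => C n * (Y n + S n)) ℱ μ := by
    refine supermartingale_nat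
      (fun n => ((hCad n).mul ((hYmeas n).add (hSad n))).stronglyMeasurable)
      (fun n => (hQint n).bdd_mul
        ((hCad n).mono (ℱ.le n) le_rfl).aestronglyMeasurable (hCbdd n)) fun n => ?_
    have hpull := condExp_stronglyMeasurable_mul_of_bound (ℱ.le n)
      (hCpred n).stronglyMeasurable (hQint (n + 1)) 1 (hCbdd (n + 1))
    have hsplit := condExp_add (hYint (n + 1)) (hSint (n + 1)) (ℱ n)
    rw [condExp_of_stronglyMeasurable (ℱ.le n) (hSpred n).stronglyMeasurable
      (hSint (n + 1))] at hsplit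
    filter_upwards [hpull, hsplit, hsuper n] with ω h1 h2 h3
    have hSsucc : S (n + 1) ω = S n ω + Z n ω := by
      simp only [hS, Finset.sum_range_succ]; ring
    have hCsucc : C (n + 1) ω * (1 + W n ω) = C n ω := by
      have : 1 + W n ω ≠ 0 := by linarith [hWnonneg n ω]
      simp only [hC, Finset.prod_range_succ, mul_inv]
      rw [inv_mul_cancel_right₀ this]
    rw [h1]
    simp only [Pi.mul_apply, Pi.add_apply] at h2 ⊢
    rw [h2, hSsucc, ← hCsucc, mul_assoc]
    refine mul_le_mul_of_nonneg_left ?_ (hC0 (n + 1) ω)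
    -- `Q n + W n ≤ (1 + W n) * Q n`, because `Q n = Y n + S n ≥ 1`
    nlinarith [hWnonneg n ω, hS1 n ω, hYnonneg n ω]
  have hX0 : ∀ n ω, 0 ≤ (C n * (Y n + S n)) ω := fun n ω =>
    mul_nonneg (hC0 n ω) (add_nonneg (hYnonneg n ω) (zero_le_one.trans (hS1 n ω)))
  filter_upwards [ae_tendsto_of_nonneg_supermartingale hX hX0, hWsum] with ω ⟨c, hc⟩ hw
  exact summable_and_tendsto_of_weighted_tendsto (fun n => hYnonneg n ω)
    (fun n => hZnonneg n ω) (fun n => hWnonneg n ω) hw hc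
end

section
/- In the 3D LASSO example, for every x ∈ ℝ³ and every i ∈ {1,2,3}, one has ‖∇f_i(x) − ∇F(x)‖ ≥ ‖∇F(x)‖, where ‖·‖ is the Euclidean norm. In particular, the stochastic gradient error ∇f_i(x) − ∇F(x) does not vanish at any point where ∇F(x) ≠ 0. -/
/-!
The gradients `∇fᵢ(x) = (⟨Kᵢ, x⟩ - bᵢ) Kᵢ` are pairwise orthogonal because the rows of the diagonal
matrix `K` are. Hence `⟨∇fᵢ, ∇F⟩ = ‖∇fᵢ‖² / 3`, and
`‖∇fᵢ - ∇F‖² = ‖∇fᵢ‖² - 2 ⟨∇fᵢ, ∇F⟩ + ‖∇F‖² = ‖∇fᵢ‖² / 3 + ‖∇F‖² ≥ ‖∇F‖²`.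
-/

open scoped RealInnerProductSpace

theorem hasGradientAt_half_sq_inner_sub {E : Type*} [NormedAddCommGroup E]
    [InnerProductSpace ℝ E] [CompleteSpace E] (k : E) (c : ℝ) (x : E) :
    HasGradientAt (fun y => (⟪k, y⟫ - c) ^ 2 / 2) ((⟪k, x⟫ - c) • k) x := by
  rw [hasGradientAt_iff_hasFDerivAt]
  have h : HasFDerivAt (fun y : E => ⟪k, y⟫ - c) (innerSL ℝ k) x :=
    ((innerSL ℝ k).hasFDerivAt (x := x)).sub_const c
  have h2 := (h.pow 2).mul_const (2⁻¹ : ℝ)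
  simp only [div_eq_mul_inv]
  refine h2.congr_fderiv ?_
  ext v
  simp [InnerProductSpace.toDual_apply_apply]
  ring

/-- If `g` is orthogonal to `G - g / 3`, then subtracting `G` from `g` gives a vector at least as
long as `G`, since `‖g - G‖² - ‖G‖² = ‖g‖² / 3`. -/
theorem norm_le_norm_sub_of_inner_eq {E : Type*} [NormedAddCommGroup E]
    [InnerProductSpace ℝ E] (g G : E) (h : ⟪g, G⟫ = ‖g‖ ^ 2 / 3) : ‖G‖ ≤ ‖g - G‖ := by
  have h1 := norm_sub_sq_real g G
  rw [h] at h1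
  refine (sq_le_sq₀ (norm_nonneg _) (norm_nonneg _)).mp ?_
  nlinarith [sq_nonneg ‖g‖]

/-- In the 3D LASSO example with `K = diag(1, √2, √3)`, `b = (2, √2/3, √3/4)`,
`fᵢ(x) = (⟨Kᵢ, x⟩ - bᵢ)²/2` and `F = (1/3)(f₁ + f₂ + f₃)`: for every `x` and every `i`,
`‖∇fᵢ(x) - ∇F(x)‖ ≥ ‖∇F(x)‖`; in particular the stochastic gradient error
`∇fᵢ(x) - ∇F(x)` does not vanish at any point where `∇F(x) ≠ 0`. -/
theorem lasso3d_sgd_error_lower_bound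
    (Krow : Fin 3 → EuclideanSpace ℝ (Fin 3))
    (hK0 : Krow 0 = (WithLp.equiv 2 (Fin 3 → ℝ)).symm ![1, 0, 0])
    (hK1 : Krow 1 = (WithLp.equiv 2 (Fin 3 → ℝ)).symm ![0, Real.sqrt 2, 0])
    (hK2 : Krow 2 = (WithLp.equiv 2 (Fin 3 → ℝ)).symm ![0, 0, Real.sqrt 3])
    (b : Fin 3 → ℝ) (hb : b = ![2, Real.sqrt 2 / 3, Real.sqrt 3 / 4])
    (f : Fin 3 → EuclideanSpace ℝ (Fin 3) → ℝ)
    (hf : ∀ i x, f i x = (⟪Krow i, x⟫ - b i) ^ 2 / 2)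
    (F : EuclideanSpace ℝ (Fin 3) → ℝ)
    (hF : ∀ x, F x = (1 / 3 : ℝ) * ∑ i, f i x) :
    ∀ (x : EuclideanSpace ℝ (Fin 3)) (i : Fin 3),
      ‖gradient (f i) x - gradient F x‖ ≥ ‖gradient F x‖ ∧
      (gradient F x ≠ 0 → gradient (f i) x - gradient F x ≠ 0) := by
  intro x i
  have hgf : ∀ j, HasGradientAt (f j) ((⟪Krow j, x⟫ - b j) • Krow j) x := fun j => by
    rw [show f j = fun y => (⟪Krow j, y⟫ - b j) ^ 2 / 2 from funext (hf j)]
    exact hasGradientAt_half_sq_inner_sub _ _ _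
  have hgF : HasGradientAt F
      ((1 / 3 : ℝ) • ∑ j, (⟪Krow j, x⟫ - b j) • Krow j) x := by
    rw [show F = fun y => (1 / 3 : ℝ) * ∑ j, f j y from funext hF,
      hasGradientAt_iff_hasFDerivAt]
    have h := (HasFDerivAt.fun_sum (u := Finset.univ)
      fun j _ => (hgf j).hasFDerivAt).const_mul (1 / 3 : ℝ)
    refine h.congr_fderiv ?_
    ext v
    simp
  have horth : ∀ j k, j ≠ k → ⟪Krow j, Krow k⟫ = 0 := by
    intro j k hjk
    fin_cases j <;> fin_cases k <;>
      simp_all [PiLp.inner_apply, Fin.sum_univ_three]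
  have hle : ‖gradient F x‖ ≤ ‖gradient (f i) x - gradient F x‖ := by
    rw [hgF.gradient, (hgf i).gradient]
    apply norm_le_norm_sub_of_inner_eq
    rw [inner_smul_right, inner_sum, Finset.sum_eq_single i]
    · rw [real_inner_self_eq_norm_sq]
      ring
    · intro j _ hj
      rw [inner_smul_left, inner_smul_right, horth i j hj.symm]
      simp
    · simp
  refine ⟨hle, fun hne h0 => hne ?_⟩
  rw [h0, norm_zero] at hle
  exact norm_le_zero_iff.mp hle
end

section
/- In the 3D LASSO example, let x₀ = (μ, 0, 0) with μ ∈ ℝ, let γ > 0, and for i ∈ {2, 3} let x₁ := prox_{γ·(1/3)‖·‖₁}(x₀ − γ∇f_i(x₀)) be the Prox-SGD update when index i is sampled. If |μ| > γ, then x₁ has exactly two nonzero coordinates (coordinates 1 and i); in particular x₁ does not belong to the line {(t, 0, 0) : t ∈ ℝ} containing the minimizer (1, 0, 0). -/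
open scoped RealInnerProductSpace

/-!
The gradient of `fᵢ` at `x` is `(⟪Kᵢ, x⟫ - bᵢ) • Kᵢ`, so the forward step from `x₀ = (μ, 0, 0)`
lands at `z = (μ, 2γ/3, 0)` for the second index and at `z = (μ, 0, 3γ/4)` for the third. The
prox objective is separable (`prox_coord_le`), so each coordinate of `x₁` minimizes
`t ↦ γ/3 * |t| + (t - zⱼ)² / 2`. Such a minimizer is nonzero when `γ/3 < |zⱼ|`
(`scalar_prox_ne_zero`) and zero when `zⱼ = 0` (`scalar_prox_eq_zero`).
-/

lemma gradient_half_sq_residual {E : Type*} [NormedAddCommGroup E] [InnerProductSpace ℝ E]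
    [CompleteSpace E] (k : E) (c : ℝ) (x : E) :
    gradient (fun y : E => (⟪k, y⟫ - c) ^ 2 / 2) x = (⟪k, x⟫ - c) • k := by
  apply HasGradientAt.gradient
  rw [hasGradientAt_iff_hasFDerivAt]
  have h : HasFDerivAt (fun y : E => ⟪k, y⟫ - c) (innerSL ℝ k) x :=
    (innerSL ℝ k).hasFDerivAt.sub_const c
  have h2 := (h.pow 2).mul_const (1 / 2 : ℝ)
  have e : InnerProductSpace.toDual ℝ E ((⟪k, x⟫ - c) • k)
      = (1 / 2 : ℝ) • (2 • (⟪k, x⟫ - c) ^ (2 - 1)) • innerSL ℝ k := by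
    ext y
    simp
    ring
  rw [e]
  simpa only [div_eq_mul_inv, one_mul] using h2

/-- Separability of the prox objective: changing a single coordinate of a minimizer cannot
decrease the corresponding scalar objective. -/
lemma prox_coord_le {n : ℕ} {l : ℝ} {z x : EuclideanSpace ℝ (Fin n)}
    (h : IsMinOn (fun y : EuclideanSpace ℝ (Fin n) => l * ∑ j, |y j| + ‖y - z‖ ^ 2 / 2)
      Set.univ x) (j : Fin n) (t : ℝ) :
    l * |x j| + (x j - z j) ^ 2 / 2 ≤ l * |t| + (t - z j) ^ 2 / 2 := by
  have h1 := h (Set.mem_univ (WithLp.toLp 2 (Function.update x.ofLp j t)))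
  simp only [Set.mem_ofPred_eq, EuclideanSpace.norm_sq_eq, PiLp.sub_apply, Real.norm_eq_abs,
    sq_abs] at h1
  rw [← Finset.add_sum_erase _ _ (Finset.mem_univ j),
    ← Finset.add_sum_erase _ _ (Finset.mem_univ j),
    ← Finset.add_sum_erase _ (fun i => |Function.update x.ofLp j t i|) (Finset.mem_univ j),
    ← Finset.add_sum_erase _ (fun i => (Function.update x.ofLp j t i - z i) ^ 2)
      (Finset.mem_univ j)] at h1
  have e1 : ∑ i ∈ Finset.univ.erase j, |Function.update x.ofLp j t i|
      = ∑ i ∈ Finset.univ.erase j, |x i| :=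
    Finset.sum_congr rfl fun i hi => by
      rw [Function.update_of_ne (Finset.ne_of_mem_erase hi)]
  have e2 : ∑ i ∈ Finset.univ.erase j, (Function.update x.ofLp j t i - z i) ^ 2
      = ∑ i ∈ Finset.univ.erase j, (x i - z i) ^ 2 :=
    Finset.sum_congr rfl fun i hi => by
      rw [Function.update_of_ne (Finset.ne_of_mem_erase hi)]
  rw [e1, e2] at h1
  simp only [Function.update_self] at h1
  linarith

lemma scalar_prox_ne_zero {l a z : ℝ} (hz : l < |z|)
    (h : ∀ t : ℝ, l * |a| + (a - z) ^ 2 / 2 ≤ l * |t| + (t - z) ^ 2 / 2) : a ≠ 0 := by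
  rintro rfl
  -- The competitor is the soft-thresholded point `z - l * sign z`.
  rcases lt_abs.1 hz with hz | hz
  · have := h (z - l)
    rw [abs_of_pos (sub_pos.2 hz), abs_zero] at this
    nlinarith [mul_pos (sub_pos.2 hz) (sub_pos.2 hz)]
  · have := h (z + l)
    rw [abs_zero, abs_of_neg (show z + l < 0 by linarith)] at this
    nlinarith [mul_pos (sub_pos.2 hz) (sub_pos.2 hz)]

lemma scalar_prox_eq_zero {l a : ℝ} (hl : 0 ≤ l)
    (h : ∀ t : ℝ, l * |a| + (a - 0) ^ 2 / 2 ≤ l * |t| + (t - 0) ^ 2 / 2) : a = 0 := by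
  have h0 := h 0
  simp only [abs_zero, sub_zero] at h0
  have := mul_nonneg hl (abs_nonneg a)
  exact pow_eq_zero_iff two_ne_zero |>.1 (by nlinarith [sq_nonneg a])

/-- In the 3D LASSO example: starting Prox-SGD at `x₀ = (μ, 0, 0)` with step-size `γ > 0`
and sampling index `i ∈ {2, 3}` (here 0-indexed as `i = 1` or `i = 2`), if `|μ| > γ` then
`x₁ = prox_{(γ/3)‖·‖₁}(x₀ - γ∇fᵢ(x₀))` has exactly two nonzero coordinates (the first
coordinate and coordinate `i`); in particular `x₁` does not lie on the line
`{(t,0,0) : t ∈ ℝ}` containing the minimizer `(1,0,0)`. -/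
theorem lasso3d_prox_sgd_leaves_support
    (Krow : Fin 3 → EuclideanSpace ℝ (Fin 3))
    (hK0 : Krow 0 = (WithLp.equiv 2 (Fin 3 → ℝ)).symm ![1, 0, 0])
    (hK1 : Krow 1 = (WithLp.equiv 2 (Fin 3 → ℝ)).symm ![0, Real.sqrt 2, 0])
    (hK2 : Krow 2 = (WithLp.equiv 2 (Fin 3 → ℝ)).symm ![0, 0, Real.sqrt 3])
    (b : Fin 3 → ℝ) (hb : b = ![2, Real.sqrt 2 / 3, Real.sqrt 3 / 4])
    (f : Fin 3 → EuclideanSpace ℝ (Fin 3) → ℝ)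
    (hf : ∀ i x, f i x = (⟪Krow i, x⟫ - b i) ^ 2 / 2)
    (μ : ℝ) (x0 : EuclideanSpace ℝ (Fin 3))
    (hx0 : x0 = (WithLp.equiv 2 (Fin 3 → ℝ)).symm ![μ, 0, 0])
    (γ : ℝ) (hγ : 0 < γ)
    (i : Fin 3) (hi : i = 1 ∨ i = 2)
    (x1 : EuclideanSpace ℝ (Fin 3))
    (hx1 : IsMinOn
      (fun y => γ / 3 * ∑ j, |y j| + ‖y - (x0 - γ • gradient (f i) x0)‖ ^ 2 / 2)
      Set.univ x1)
    (hμγ : γ < |μ|) :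
    x1 0 ≠ 0 ∧ x1 i ≠ 0 ∧ (∀ j : Fin 3, j ≠ 0 → j ≠ i → x1 j = 0) ∧
    ∀ t : ℝ, x1 ≠ (WithLp.equiv 2 (Fin 3 → ℝ)).symm ![t, 0, 0] := by
  have hlμ : γ / 3 < |μ| := by linarith
  have hfi : f i = fun x => (⟪Krow i, x⟫ - b i) ^ 2 / 2 := funext (hf i)
  rw [hfi, gradient_half_sq_residual] at hx1
  have hc := prox_coord_le hx1
  have h2 : Real.sqrt 2 * Real.sqrt 2 = 2 := Real.mul_self_sqrt (by norm_num)
  have h3 : Real.sqrt 3 * Real.sqrt 3 = 3 := Real.mul_self_sqrt (by norm_num)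
  suffices H : x1 0 ≠ 0 ∧ x1 i ≠ 0 ∧ (∀ j : Fin 3, j ≠ 0 → j ≠ i → x1 j = 0) by
    refine ⟨H.1, H.2.1, H.2.2, fun t ht => H.2.1 ?_⟩
    rcases hi with rfl | rfl <;> simp [ht]
  rcases hi with rfl | rfl
  · have z0 : (x0 - γ • (⟪Krow 1, x0⟫ - b 1) • Krow 1) 0 = μ := by
      simp [hx0, hK1]
    have z1 : (x0 - γ • (⟪Krow 1, x0⟫ - b 1) • Krow 1) 1 = 2 * γ / 3 := by
      simp [hx0, hK1, hb, PiLp.inner_apply, Fin.sum_univ_three]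
      linear_combination γ / 3 * h2
    have z2 : (x0 - γ • (⟪Krow 1, x0⟫ - b 1) • Krow 1) 2 = 0 := by
      simp [hx0, hK1]
    refine ⟨scalar_prox_ne_zero (z := μ) hlμ fun t => z0 ▸ hc 0 t,
      scalar_prox_ne_zero (z := 2 * γ / 3) ?_ fun t => z1 ▸ hc 1 t, fun j hj0 hj1 => ?_⟩
    · rw [abs_of_pos (by positivity)]
      linarith
    · obtain rfl : j = 2 := by omega
      exact scalar_prox_eq_zero (by positivity) fun t => z2 ▸ hc 2 t
  · have z0 : (x0 - γ • (⟪Krow 2, x0⟫ - b 2) • Krow 2) 0 = μ := by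
      simp [hx0, hK2]
    have z1 : (x0 - γ • (⟪Krow 2, x0⟫ - b 2) • Krow 2) 1 = 0 := by
      simp [hx0, hK2]
    have z2 : (x0 - γ • (⟪Krow 2, x0⟫ - b 2) • Krow 2) 2 = 3 * γ / 4 := by
      simp [hx0, hK2, hb, PiLp.inner_apply, Fin.sum_univ_three]
      linear_combination γ / 4 * h3
    refine ⟨scalar_prox_ne_zero (z := μ) hlμ fun t => z0 ▸ hc 0 t,
      scalar_prox_ne_zero (z := 3 * γ / 4) ?_ fun t => z2 ▸ hc 2 t, fun j hj0 hj2 => ?_⟩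
    · rw [abs_of_pos (by positivity)]
      linarith
    · obtain rfl : j = 1 := by omega
      exact scalar_prox_eq_zero (by positivity) fun t => z1 ▸ hc 1 t
end
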